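/- Two QR-tetrahedra (tetrahedra with vertices in a packing Ω, all edges of length in [2, 251/100]) that share a common face do not overlap: their interiors are disjoint, i.e., the two tetrahedra lie on opposite sides of the plane of the common face or coincide. More precisely: if T₁ = conv{a,b,c,d} and T₂ = conv{a,b,c,e} are two such tetrahedra with d ≠ e lying strictly on the same side of the plane through a, b, c, then ‖d − e‖ < 2, contradicting the packing condition; hence d and e lie on opposite sides (or on) the plane abc, so the interiors of T₁ and T₂ are disjoint. -/

import Mathlib

/-- The convex hull of three points of `ℝ³` has empty interior. -/
theorem interior_convexHull_three_points (p q r : EuclideanSpace ℝ (Fin 3)) :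
    interior (convexHull ℝ ({p, q, r} : Set (EuclideanSpace ℝ (Fin 3)))) = ∅ := by
  by_contra! h
  rw [interior_convexHull_nonempty_iff_affineSpan_eq_top] at h
  have h₁ : Module.finrank ℝ (vectorSpan ℝ ({p, q, r} : Set (EuclideanSpace ℝ (Fin 3)))) ≤ 2 := by
    have h₂ := collinear_pair ℝ q r
    have h₃ := h₂.coplanar_insert p
    exact h₃.finrank_le_two
  rw [← direction_affineSpan, h, AffineSubspace.direction_top, finrank_top,
    finrank_euclideanSpace_fin] at h₁
  omega

theorem exists_weights_of_mem_convexHull_four {E : Type*} [AddCommGroup E] [Module ℝ E]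
    {a b c d x : E} (hx : x ∈ convexHull ℝ ({a, b, c, d} : Set E)) :
    ∃ α β γ δ : ℝ, 0 ≤ α ∧ 0 ≤ β ∧ 0 ≤ γ ∧ 0 ≤ δ ∧ α + β + γ + δ = 1 ∧
      α • a + β • b + γ • c + δ • d = x := by
  rw [convexHull_insert (by simp), mem_convexJoin] at hx
  obtain ⟨a', ha', y, hy, s, t, hs, ht, hst, rfl⟩ := hx
  rw [Set.mem_singleton_iff] at ha'
  subst ha'
  rw [convexHull_insert (by simp), mem_convexJoin] at hy
  obtain ⟨b', hb', z, hz, s', t', hs', ht', hst', rfl⟩ := hy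
  rw [Set.mem_singleton_iff] at hb'
  subst hb'
  rw [convexHull_pair] at hz
  obtain ⟨u, v, hu, hv, huv, rfl⟩ := hz
  refine ⟨s, t * s', t * (t' * u), t * (t' * v), hs, by positivity, by positivity, by positivity,
    ?_, ?_⟩
  · linear_combination hst + t * hst' + t * t' * huv
  · module

/-- For an affine dependence `∑ lᵢ pᵢ = 0`, `∑ lᵢ = 0`, the sum of `lᵢ lⱼ ‖pᵢ - pⱼ‖²` over all
pairs vanishes. -/
theorem sum_weights_mul_dist_sq_eq_zero {a b c d e : EuclideanSpace ℝ (Fin 3)}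
    {l₁ l₂ l₃ m n : ℝ} (hl : l₁ + l₂ + l₃ + m = n)
    (hv : l₁ • a + l₂ • b + l₃ • c + m • d = n • e) :
    l₁ * l₂ * dist a b ^ 2 + l₁ * l₃ * dist a c ^ 2 + l₂ * l₃ * dist b c ^ 2 +
      l₁ * m * dist a d ^ 2 + l₂ * m * dist b d ^ 2 + l₃ * m * dist c d ^ 2 =
      l₁ * n * dist a e ^ 2 + l₂ * n * dist b e ^ 2 + l₃ * n * dist c e ^ 2 +
        m * n * dist d e ^ 2 := by
  have key : ∀ i, l₁ * l₂ * (a i - b i) ^ 2 + l₁ * l₃ * (a i - c i) ^ 2 +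
      l₂ * l₃ * (b i - c i) ^ 2 + l₁ * m * (a i - d i) ^ 2 + l₂ * m * (b i - d i) ^ 2 +
      l₃ * m * (c i - d i) ^ 2 = l₁ * n * (a i - e i) ^ 2 + l₂ * n * (b i - e i) ^ 2 +
        l₃ * n * (c i - e i) ^ 2 + m * n * (d i - e i) ^ 2 := by
    intro i
    have hi : l₁ * a i + l₂ * b i + l₃ * c i + m * d i = n * e i := by
      simpa using congrArg (fun v : EuclideanSpace ℝ (Fin 3) => v i) hv
    linear_combination (l₁ * a i ^ 2 + l₂ * b i ^ 2 + l₃ * c i ^ 2 + m * d i ^ 2 - n * e i ^ 2) * hl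
      - (l₁ * a i + l₂ * b i + l₃ * c i + m * d i - n * e i) * hi
  simp only [EuclideanSpace.dist_sq_eq, Real.dist_eq, sq_abs, Fin.sum_univ_three]
  linear_combination key 0 + key 1 + key 2

/-- A point at distance at least `2` from four points with mutual distances at most `251/100` is
not a convex combination of them, in terms of weights and squared distances. -/
theorem weighted_sum_ne_of_nonneg {l₁ l₂ l₃ m n A₁₂ A₁₃ A₂₃ B₁ B₂ B₃ C₁ C₂ C₃ D : ℝ}
    (h₁ : 0 ≤ l₁) (h₂ : 0 ≤ l₂) (h₃ : 0 ≤ l₃) (hm : 0 ≤ m) (hn : 0 < n)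
    (hl : l₁ + l₂ + l₃ + m = n) (hA₁₂ : A₁₂ ≤ 63001 / 10000) (hA₁₃ : A₁₃ ≤ 63001 / 10000)
    (hA₂₃ : A₂₃ ≤ 63001 / 10000) (hB₁ : B₁ ≤ 63001 / 10000) (hB₂ : B₂ ≤ 63001 / 10000)
    (hB₃ : B₃ ≤ 63001 / 10000) (hC₁ : 4 ≤ C₁) (hC₂ : 4 ≤ C₂) (hC₃ : 4 ≤ C₃) (hD : 4 ≤ D) :
    l₁ * l₂ * A₁₂ + l₁ * l₃ * A₁₃ + l₂ * l₃ * A₂₃ + l₁ * m * B₁ + l₂ * m * B₂ + l₃ * m * B₃ ≠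
      l₁ * n * C₁ + l₂ * n * C₂ + l₃ * n * C₃ + m * n * D := by
  intro h
  have hA₁₂' := mul_le_mul_of_nonneg_left hA₁₂ (mul_nonneg h₁ h₂)
  have hA₁₃' := mul_le_mul_of_nonneg_left hA₁₃ (mul_nonneg h₁ h₃)
  have hA₂₃' := mul_le_mul_of_nonneg_left hA₂₃ (mul_nonneg h₂ h₃)
  have hB₁' := mul_le_mul_of_nonneg_left hB₁ (mul_nonneg h₁ hm)
  have hB₂' := mul_le_mul_of_nonneg_left hB₂ (mul_nonneg h₂ hm)
  have hB₃' := mul_le_mul_of_nonneg_left hB₃ (mul_nonneg h₃ hm)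
  have hC₁' := mul_le_mul_of_nonneg_left hC₁ (mul_nonneg h₁ hn.le)
  have hC₂' := mul_le_mul_of_nonneg_left hC₂ (mul_nonneg h₂ hn.le)
  have hC₃' := mul_le_mul_of_nonneg_left hC₃ (mul_nonneg h₃ hn.le)
  have hD' := mul_le_mul_of_nonneg_left hD (mul_nonneg hm hn.le)
  have hcross : l₁ * n * 4 + l₂ * n * 4 + l₃ * n * 4 + m * n * 4 = 4 * n ^ 2 := by
    linear_combination 4 * n * hl
  have hinner : 2 * (l₁ * l₂ + l₁ * l₃ + l₂ * l₃ + l₁ * m + l₂ * m + l₃ * m) ≤ n ^ 2 := by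
    rw [← hl]
    nlinarith [sq_nonneg l₁, sq_nonneg l₂, sq_nonneg l₃, sq_nonneg m]
  linarith [pow_pos hn 2]

/-- A segment and a triangle with edges at most `251/100` do not meet if the endpoints of the
segment are at distance at least `2` from the vertices of the triangle, in terms of weights
(`l₁, l₂, m` for the triangle and `k, n` for the segment) and squared distances. -/
theorem weighted_sum_ne_of_nonneg_of_nonpos {l₁ l₂ k m n A₁₂ A₁₃ A₂₃ B₁ B₂ B₃ C₁ C₂ C₃ D : ℝ}
    (h₁ : 0 ≤ l₁) (h₂ : 0 ≤ l₂) (hk : 0 ≤ k) (hm : 0 ≤ m) (hn : 0 ≤ n) (hmn : 0 < m + n)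
    (hl : l₁ + l₂ + m = k + n) (hA₁₂ : A₁₂ ≤ 63001 / 10000) (hA₁₃ : 4 ≤ A₁₃)
    (hA₂₃ : 4 ≤ A₂₃) (hB₁ : B₁ ≤ 63001 / 10000) (hB₂ : B₂ ≤ 63001 / 10000)
    (hB₃ : 4 ≤ B₃) (hC₁ : 4 ≤ C₁) (hC₂ : 4 ≤ C₂) (hC₃ : C₃ ≤ 63001 / 10000) (hD : 4 ≤ D) :
    l₁ * l₂ * A₁₂ + l₁ * m * B₁ + l₂ * m * B₂ + k * n * C₃ ≠
      l₁ * k * A₁₃ + l₂ * k * A₂₃ + k * m * B₃ + l₁ * n * C₁ + l₂ * n * C₂ + m * n * D := by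
  intro h
  have hA₁₂' := mul_le_mul_of_nonneg_left hA₁₂ (mul_nonneg h₁ h₂)
  have hA₁₃' := mul_le_mul_of_nonneg_left hA₁₃ (mul_nonneg h₁ hk)
  have hA₂₃' := mul_le_mul_of_nonneg_left hA₂₃ (mul_nonneg h₂ hk)
  have hB₁' := mul_le_mul_of_nonneg_left hB₁ (mul_nonneg h₁ hm)
  have hB₂' := mul_le_mul_of_nonneg_left hB₂ (mul_nonneg h₂ hm)
  have hB₃' := mul_le_mul_of_nonneg_left hB₃ (mul_nonneg hk hm)
  have hC₁' := mul_le_mul_of_nonneg_left hC₁ (mul_nonneg h₁ hn)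
  have hC₂' := mul_le_mul_of_nonneg_left hC₂ (mul_nonneg h₂ hn)
  have hC₃' := mul_le_mul_of_nonneg_left hC₃ (mul_nonneg hk hn)
  have hD' := mul_le_mul_of_nonneg_left hD (mul_nonneg hm hn)
  have hcross : l₁ * k * 4 + l₂ * k * 4 + k * m * 4 + l₁ * n * 4 + l₂ * n * 4 + m * n * 4 =
      4 * (k + n) ^ 2 := by
    linear_combination 4 * (k + n) * hl
  have hpair : 4 * (k * n) ≤ (k + n) ^ 2 := by
    linarith [sq_nonneg (k - n), show (k + n) ^ 2 = 4 * (k * n) + (k - n) ^ 2 by ring]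
  have htriple : 3 * (l₁ * l₂ + l₁ * m + l₂ * m) ≤ (k + n) ^ 2 := by
    rw [← hl]
    nlinarith [sq_nonneg (l₁ - l₂), sq_nonneg (l₁ - m), sq_nonneg (l₂ - m)]
  have hpos : 0 < k + n := by linarith
  linarith [pow_pos hpos 2]

/-- The weights of a pair of points `d, e` of a packing over a common face cannot satisfy the
relation imposed by an affine dependence. -/
theorem weighted_sum_ne {l₁ l₂ l₃ m n A₁₂ A₁₃ A₂₃ B₁ B₂ B₃ C₁ C₂ C₃ D : ℝ}
    (hm : 0 ≤ m) (hn : 0 ≤ n) (hmn : 0 < m + n) (hl : l₁ + l₂ + l₃ + m = n)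
    (hA₁₂ : 4 ≤ A₁₂ ∧ A₁₂ ≤ 63001 / 10000) (hA₁₃ : 4 ≤ A₁₃ ∧ A₁₃ ≤ 63001 / 10000)
    (hA₂₃ : 4 ≤ A₂₃ ∧ A₂₃ ≤ 63001 / 10000) (hB₁ : 4 ≤ B₁ ∧ B₁ ≤ 63001 / 10000)
    (hB₂ : 4 ≤ B₂ ∧ B₂ ≤ 63001 / 10000) (hB₃ : 4 ≤ B₃ ∧ B₃ ≤ 63001 / 10000)
    (hC₁ : 4 ≤ C₁ ∧ C₁ ≤ 63001 / 10000) (hC₂ : 4 ≤ C₂ ∧ C₂ ≤ 63001 / 10000)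
    (hC₃ : 4 ≤ C₃ ∧ C₃ ≤ 63001 / 10000) (hD : 4 ≤ D) :
    l₁ * l₂ * A₁₂ + l₁ * l₃ * A₁₃ + l₂ * l₃ * A₂₃ + l₁ * m * B₁ + l₂ * m * B₂ + l₃ * m * B₃ ≠
      l₁ * n * C₁ + l₂ * n * C₂ + l₃ * n * C₃ + m * n * D := by
  intro h
  rcases le_total 0 l₁ with h₁ | h₁ <;> rcases le_total 0 l₂ with h₂ | h₂ <;>
    rcases le_total 0 l₃ with h₃ | h₃
  · exact weighted_sum_ne_of_nonneg h₁ h₂ h₃ hm (by linarith) hl hA₁₂.2 hA₁₃.2 hA₂₃.2 hB₁.2 hB₂.2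
      hB₃.2 hC₁.1 hC₂.1 hC₃.1 hD h
  · exact weighted_sum_ne_of_nonneg_of_nonpos h₁ h₂ (neg_nonneg.2 h₃) hm hn hmn (by linarith)
      hA₁₂.2 hA₁₃.1 hA₂₃.1 hB₁.2 hB₂.2 hB₃.1 hC₁.1 hC₂.1 hC₃.2 hD (by linear_combination h)
  · exact weighted_sum_ne_of_nonneg_of_nonpos h₁ h₃ (neg_nonneg.2 h₂) hm hn hmn (by linarith)
      hA₁₃.2 hA₁₂.1 hA₂₃.1 hB₁.2 hB₃.2 hB₂.1 hC₁.1 hC₃.1 hC₂.2 hD (by linear_combination h)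
  · exact weighted_sum_ne_of_nonneg_of_nonpos (neg_nonneg.2 h₂) (neg_nonneg.2 h₃) h₁ hn hm
      (by linarith) (by linarith) hA₂₃.2 hA₁₂.1 hA₁₃.1 hC₂.2 hC₃.2 hC₁.1 hB₂.1 hB₃.1 hB₁.2 hD
      (by linear_combination h)
  · exact weighted_sum_ne_of_nonneg_of_nonpos h₂ h₃ (neg_nonneg.2 h₁) hm hn hmn (by linarith)
      hA₂₃.2 hA₁₂.1 hA₁₃.1 hB₂.2 hB₃.2 hB₁.1 hC₂.1 hC₃.1 hC₁.2 hD (by linear_combination h)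
  · exact weighted_sum_ne_of_nonneg_of_nonpos (neg_nonneg.2 h₁) (neg_nonneg.2 h₃) h₂ hn hm
      (by linarith) (by linarith) hA₁₃.2 hA₁₂.1 hA₂₃.1 hC₁.2 hC₃.2 hC₂.1 hB₁.1 hB₃.1 hB₂.2 hD
      (by linear_combination h)
  · exact weighted_sum_ne_of_nonneg_of_nonpos (neg_nonneg.2 h₁) (neg_nonneg.2 h₂) h₃ hn hm
      (by linarith) (by linarith) hA₁₂.2 hA₁₃.1 hA₂₃.1 hC₁.2 hC₂.2 hC₃.1 hB₁.1 hB₂.1 hB₃.2 hD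
      (by linear_combination h)
  · exact weighted_sum_ne_of_nonneg (n := m) (neg_nonneg.2 h₁) (neg_nonneg.2 h₂)
      (neg_nonneg.2 h₃) hn (by linarith) (by linarith) hA₁₂.2 hA₁₃.2 hA₂₃.2 hC₁.2 hC₂.2 hC₃.2 hB₁.1 hB₂.1 hB₃.1 hD
      (by linear_combination h)

/-- The vertices of a tetrahedron with nonempty interior are distinct. -/
theorem pairwise_ne_of_interior_convexHull_nonempty {a b c d : EuclideanSpace ℝ (Fin 3)}
    (h : (interior (convexHull ℝ ({a, b, c, d} : Set (EuclideanSpace ℝ (Fin 3))))).Nonempty) :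
    a ≠ b ∧ a ≠ c ∧ b ≠ c ∧ a ≠ d ∧ b ≠ d ∧ c ≠ d := by
  have key : ∀ p q r : EuclideanSpace ℝ (Fin 3), ({a, b, c, d} : Set _) ≠ {p, q, r} := by
    intro p q r hpqr
    rw [hpqr, interior_convexHull_three_points] at h
    exact Set.not_nonempty_empty h
  refine ⟨?_, ?_, ?_, ?_, ?_, ?_⟩ <;> rintro rfl
  · exact key a c d (by ext; simp)
  · exact key a b d (by ext; simp; tauto)
  · exact key a b d (by ext; simp)
  · exact key a b c (by ext; simp; tauto)
  · exact key a b c (by ext; simp; tauto)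
  · exact key a b c (by ext; simp)

/-- Two QR-tetrahedra of a packing `Ω` that share a common face do not overlap: if
`T₁ = conv{a,b,c,d}` and `T₂ = conv{a,b,c,e}` have all vertices in `Ω` and all edge
lengths in `[2, 251/100]`, with `d ≠ e`, then the interiors of `T₁` and `T₂` are
disjoint. -/
theorem qr_tetrahedra_common_face_no_overlap (Ω : Set (EuclideanSpace ℝ (Fin 3)))
    (hpack : ∀ v ∈ Ω, ∀ w ∈ Ω, v ≠ w → 2 ≤ dist v w)
    (a b c d e : EuclideanSpace ℝ (Fin 3))
    (ha : a ∈ Ω) (hb : b ∈ Ω) (hc : c ∈ Ω) (hd : d ∈ Ω) (he : e ∈ Ω)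
    (hde : d ≠ e)
    (hT₁ : ∀ p ∈ ({a, b, c, d} : Set (EuclideanSpace ℝ (Fin 3))),
      ∀ q ∈ ({a, b, c, d} : Set (EuclideanSpace ℝ (Fin 3))), p ≠ q →
        2 ≤ dist p q ∧ dist p q ≤ 251 / 100)
    (hT₂ : ∀ p ∈ ({a, b, c, e} : Set (EuclideanSpace ℝ (Fin 3))),
      ∀ q ∈ ({a, b, c, e} : Set (EuclideanSpace ℝ (Fin 3))), p ≠ q →
        2 ≤ dist p q ∧ dist p q ≤ 251 / 100) :
    interior (convexHull ℝ ({a, b, c, d} : Set (EuclideanSpace ℝ (Fin 3)))) ∩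
      interior (convexHull ℝ ({a, b, c, e} : Set (EuclideanSpace ℝ (Fin 3)))) = ∅ := by
  by_contra! hU
  obtain ⟨hab, hac, hbc, had, hbd, hcd⟩ :=
    pairwise_ne_of_interior_convexHull_nonempty (hU.mono Set.inter_subset_left)
  obtain ⟨-, -, -, hae, hbe, hce⟩ :=
    pairwise_ne_of_interior_convexHull_nonempty (hU.mono Set.inter_subset_right)
  obtain ⟨x, ⟨hx₁, hx₂⟩, hx⟩ : ∃ x ∈ interior (convexHull ℝ {a, b, c, d}) ∩
      interior (convexHull ℝ {a, b, c, e}), x ∉ convexHull ℝ {a, b, c} := by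
    by_contra! hsub
    have := interior_maximal hsub (isOpen_interior.inter isOpen_interior)
    rw [interior_convexHull_three_points] at this
    exact Set.not_nonempty_empty (hU.mono this)
  obtain ⟨α, β, γ, δ, hα, hβ, hγ, hδ, hsum, hcomb⟩ :=
    exists_weights_of_mem_convexHull_four (interior_subset hx₁)
  obtain ⟨α', β', γ', ε, -, -, -, hε, hsum', hcomb'⟩ :=
    exists_weights_of_mem_convexHull_four (interior_subset hx₂)
  have hδ₀ : δ ≠ 0 := by
    rintro rfl
    refine hx ?_
    rw [← hcomb, zero_smul, add_zero]
    have hconv := convex_convexHull ℝ ({a, b, c} : Set (EuclideanSpace ℝ (Fin 3)))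
    have hmem := subset_convexHull ℝ ({a, b, c} : Set (EuclideanSpace ℝ (Fin 3)))
    have := hconv.sum_mem (t := Finset.univ) (w := ![α, β, γ]) (z := ![a, b, c])
      (by intro i _; fin_cases i <;> simpa)
      (by simpa [Fin.sum_univ_three] using hsum)
      (by intro i _; fin_cases i <;> exact hmem (by simp))
    simpa [Fin.sum_univ_three] using this
  have hsq : ∀ {r : ℝ}, 2 ≤ r ∧ r ≤ 251 / 100 → 4 ≤ r ^ 2 ∧ r ^ 2 ≤ 63001 / 10000 := by
    rintro r ⟨h₁, h₂⟩
    constructor <;> nlinarith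
  have hl : (α - α') + (β - β') + (γ - γ') + δ = ε := by linarith
  have hv : (α - α') • a + (β - β') • b + (γ - γ') • c + δ • d = ε • e := by
    linear_combination (norm := module) hcomb - hcomb'
  have hde₂ : 4 ≤ dist d e ^ 2 := by nlinarith [hpack d hd e he hde]
  exact weighted_sum_ne hδ hε (by positivity) hl
    (hsq (hT₁ a (by simp) b (by simp) hab)) (hsq (hT₁ a (by simp) c (by simp) hac))
    (hsq (hT₁ b (by simp) c (by simp) hbc)) (hsq (hT₁ a (by simp) d (by simp) had))
    (hsq (hT₁ b (by simp) d (by simp) hbd)) (hsq (hT₁ c (by simp) d (by simp) hcd))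
    (hsq (hT₂ a (by simp) e (by simp) hae)) (hsq (hT₂ b (by simp) e (by simp) hbe))
    (hsq (hT₂ c (by simp) e (by simp) hce)) hde₂ (sum_weights_mul_dist_sq_eq_zero hl hv)
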